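/- Let d ≥ 1 and k ≥ d be integers, and let (p₁, …, p_{2k}) and (q₁, …, q_{2k}) be two sequences of points in ℝ^d, each in general position, having the same order type (i.e., for every choice of indices i₁ < i₂ < ⋯ < i_{d+1}, the orientation of (p_{i₁}, …, p_{i_{d+1}}) equals the orientation of (q_{i₁}, …, q_{i_{d+1}})). If the sets {p₁, …, p_k} and {p_{k+1}, …, p_{2k}} are mutually avoiding, then the sets {q₁, …, q_k} and {q_{k+1}, …, q_{2k}} are mutually avoiding. -/

import Mathlib

noncomputable section

/-- The orientation of an ordered `(d+1)`-tuple of points in `ℝ^d`: the sign of the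
determinant of the `(d+1) × (d+1)` matrix whose columns are `(1, qᵢ)`. -/
noncomputable def orientation (d : ℕ) (q : Fin (d + 1) → EuclideanSpace ℝ (Fin d)) : ℝ :=
  Real.sign (Matrix.det (Matrix.of fun i j => (Fin.cons (1 : ℝ) (fun t : Fin d => q j t) : Fin (d + 1) → ℝ) i))

/-- A point sequence in `ℝ^d` is in general position if no `d+1` of its points lie on a
common hyperplane, i.e. any `d+1` of its points are affinely independent. -/
def GenPosSeq (d n : ℕ) (p : Fin n → EuclideanSpace ℝ (Fin d)) : Prop :=
  ∀ f : Fin (d + 1) → Fin n, Function.Injective f → AffineIndependent ℝ (p ∘ f)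

/-- The tuple of subsets `(A 0, …, A (k-1))` of the point sequence `p` has same-type
transversals: any two transversals have the same order type, i.e. the orientations of
corresponding `(d+1)`-subtuples agree. -/
def SameTypeTransversals (d k n : ℕ) (p : Fin n → EuclideanSpace ℝ (Fin d))
    (A : Fin k → Finset (Fin n)) : Prop :=
  ∀ t t' : Fin k → Fin n, (∀ i, t i ∈ A i) → (∀ i, t' i ∈ A i) →
    ∀ f : Fin (d + 1) → Fin k, StrictMono f →
      orientation d (fun j => p (t (f j))) = orientation d (fun j => p (t' (f j)))

/-- `A` avoids `B` if no hyperplane spanned by `d` points of `A` meets the convex hull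
of `B`. -/
def AvoidsD (d : ℕ) (A B : Set (EuclideanSpace ℝ (Fin d))) : Prop :=
  ∀ s : Finset (EuclideanSpace ℝ (Fin d)), ↑s ⊆ A → s.card = d →
    Disjoint
      ((affineSpan ℝ (s : Set (EuclideanSpace ℝ (Fin d)))
        : AffineSubspace ℝ (EuclideanSpace ℝ (Fin d))) : Set (EuclideanSpace ℝ (Fin d)))
      (convexHull ℝ B)

def MutuallyAvoidingD (d : ℕ) (A B : Set (EuclideanSpace ℝ (Fin d))) : Prop :=
  AvoidsD d A B ∧ AvoidsD d B A

/-!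
For fixed points `a₁, …, a_d` spanning a hyperplane `H`, the determinant of
`(1, z), (1, a₁), …, (1, a_d)` is an affine functional of `z` whose zero set is `H`. It maps the
convex hull of a set `B` onto an interval, so `H` misses this hull exactly when the functional has
one and the same nonzero sign on all of `B`. Hence, in general position, avoidance is a condition on
the orientations of `(d+1)`-tuples only. Orientations of increasing tuples determine those of all
injective tuples, because permuting a tuple multiplies its orientation by the sign of the
permutation.
-/

theorem affineIndependent_finCons {k V P : Type*} [DivisionRing k] [AddCommGroup V] [Module k V]
    [AddTorsor V P] {n : ℕ} {x : P} {a : Fin n → P} :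
    AffineIndependent k (Fin.cons x a : Fin (n + 1) → P) ↔
      AffineIndependent k a ∧ x ∉ affineSpan k (Set.range a) := by
  have image_compl_zero : (Fin.cons x a : Fin (n + 1) → P) '' {0}ᶜ = Set.range a := by
    rw [← Fin.range_succ, ← Set.range_comp]
    rfl
  refine ⟨fun h => ⟨h.comp_embedding (Fin.succEmb n), ?_⟩, fun ⟨ha, hx⟩ => ?_⟩
  · simpa [← image_compl_zero, Set.compl_eq_univ_sdiff] using h.notMem_affineSpan_sdiff 0 Set.univ
  · refine AffineIndependent.affineIndependent_of_notMem_span (i := 0) ?_ ?_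
    · rw [← affineIndependent_equiv (finSuccAboveEquiv 0)]
      exact ha
    · simpa [← image_compl_zero, Set.compl_def] using hx

theorem mem_convexHull_iff_exists_le_and_exists_ge {𝕜 : Type*} [Field 𝕜] [LinearOrder 𝕜]
    [IsStrictOrderedRing 𝕜] {s : Set 𝕜} {c : 𝕜} :
    c ∈ convexHull 𝕜 s ↔ (∃ x ∈ s, x ≤ c) ∧ ∃ y ∈ s, c ≤ y := by
  constructor
  · contrapose!
    intro h hc
    by_cases hs : ∃ x ∈ s, x ≤ c
    · exact Set.self_notMem_Iio (convexHull_min (h hs) (convex_Iio c) hc)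
    · push Not at hs
      exact Set.self_notMem_Ioi (convexHull_min hs (convex_Ioi c) hc)
  · rintro ⟨⟨x, hx, hxc⟩, y, hy, hcy⟩
    exact (convex_convexHull 𝕜 s).ordConnected.out (subset_convexHull 𝕜 s hx)
      (subset_convexHull 𝕜 s hy) ⟨hxc, hcy⟩

theorem zero_notMem_convexHull_iff_sign_eq {s : Set ℝ} (hs : 0 ∉ s) :
    0 ∉ convexHull ℝ s ↔ ∀ x ∈ s, ∀ y ∈ s, Real.sign x = Real.sign y := by
  have neg_or_pos : ∀ x ∈ s, x < 0 ∨ 0 < x := fun x hx => (ne_of_mem_of_not_mem hx hs).lt_or_gt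
  rw [mem_convexHull_iff_exists_le_and_exists_ge]
  constructor
  · intro one_sided x hx y hy
    rcases neg_or_pos x hx with hx0 | hx0 <;> rcases neg_or_pos y hy with hy0 | hy0
    · rw [Real.sign_of_neg hx0, Real.sign_of_neg hy0]
    · exact absurd ⟨⟨x, hx, hx0.le⟩, y, hy, hy0.le⟩ one_sided
    · exact absurd ⟨⟨y, hy, hy0.le⟩, x, hx, hx0.le⟩ one_sided
    · rw [Real.sign_of_pos hx0, Real.sign_of_pos hy0]
  · rintro sign_eq ⟨⟨x, hx, x_nonpos⟩, y, hy, y_nonneg⟩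
    have sign_x : Real.sign x = -1 :=
      Real.sign_of_neg ((neg_or_pos x hx).resolve_right x_nonpos.not_gt)
    have sign_y : Real.sign y = 1 :=
      Real.sign_of_pos ((neg_or_pos y hy).resolve_left y_nonneg.not_gt)
    linarith [sign_eq x hx y hy]

/-- The embedding `x ↦ (1, x)` of `ℝ^d` into `ℝ^(d+1)`, turning affine relations between
points into linear ones. -/
def homogenize (d : ℕ) : EuclideanSpace ℝ (Fin d) →ᵃ[ℝ] (Fin (d + 1) → ℝ) where
  toFun x := Fin.cons 1 x
  linear :=
    { toFun := fun v => Fin.cons 0 v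
      map_add' := fun v w => by ext i; cases i using Fin.cases <;> simp
      map_smul' := fun c v => by ext i; cases i using Fin.cases <;> simp }
  map_vadd' x v := by ext i; cases i using Fin.cases <;> simp

section

variable {d n : ℕ}

theorem affineIndependent_iff_linearIndependent_homogenize {ι : Type*}
    {q : ι → EuclideanSpace ℝ (Fin d)} :
    AffineIndependent ℝ q ↔ LinearIndependent ℝ (homogenize d ∘ q) := by
  have sum_eq_zero_iff (s : Finset ι) (w : ι → ℝ) :
      ∑ i ∈ s, w i • homogenize d (q i) = 0 ↔ ∑ i ∈ s, w i = 0 ∧ ∑ i ∈ s, w i • q i = 0 := by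
    simp [funext_iff, PiLp.ext_iff, Fin.forall_fin_succ, homogenize]
  simp only [affineIndependent_iff, linearIndependent_iff', Function.comp_apply, sum_eq_zero_iff,
    and_imp]

/-- The determinant whose sign is the orientation of `q`, with the vectors `(1, qᵢ)` as rows rather
than columns, so that Mathlib's alternating map `Matrix.detRowAlternating` applies to it. -/
def orientationDet (q : Fin (d + 1) → EuclideanSpace ℝ (Fin d)) : ℝ :=
  Matrix.detRowAlternating fun j => homogenize d (q j)

theorem orientation_eq_sign_orientationDet (q : Fin (d + 1) → EuclideanSpace ℝ (Fin d)) :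
    orientation d q = Real.sign (orientationDet q) :=
  congrArg Real.sign (Matrix.det_transpose _).symm

theorem orientationDet_ne_zero_iff {q : Fin (d + 1) → EuclideanSpace ℝ (Fin d)} :
    orientationDet q ≠ 0 ↔ AffineIndependent ℝ q := by
  rw [affineIndependent_iff_linearIndependent_homogenize, ← isUnit_iff_ne_zero]
  exact (Matrix.isUnit_iff_isUnit_det _).symm.trans Matrix.linearIndependent_rows_iff_isUnit.symm

theorem orientation_ne_zero_iff {q : Fin (d + 1) → EuclideanSpace ℝ (Fin d)} :
    orientation d q ≠ 0 ↔ AffineIndependent ℝ q := by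
  rw [orientation_eq_sign_orientationDet, Ne, Real.sign_eq_zero_iff, ← Ne,
    orientationDet_ne_zero_iff]

theorem orientation_comp_perm (q : Fin (d + 1) → EuclideanSpace ℝ (Fin d))
    (σ : Equiv.Perm (Fin (d + 1))) :
    orientation d (q ∘ σ) = (Equiv.Perm.sign σ : ℤ) * orientation d q := by
  have det_comp : orientationDet (q ∘ σ) = Equiv.Perm.sign σ • orientationDet q :=
    Matrix.detRowAlternating.map_perm (fun j => homogenize d (q j)) σ
  rw [orientation_eq_sign_orientationDet, orientation_eq_sign_orientationDet, det_comp]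
  rcases Int.units_eq_one_or (Equiv.Perm.sign σ) with h | h <;> simp [h, Real.sign_neg]

/-- The affine functional `z ↦ det ((1, z), (1, a₁), …, (1, a_d))`, whose sign tells on which side
of the hyperplane spanned by `a₁, …, a_d` the point `z` lies. It is linear in the row `(1, z)`; the
placeholder row `0` is overwritten by it. -/
def sideFunctional (a : Fin d → EuclideanSpace ℝ (Fin d)) : EuclideanSpace ℝ (Fin d) →ᵃ[ℝ] ℝ :=
  (Matrix.detRowAlternating.toMultilinearMap.toLinearMap
    (Fin.cons 0 fun i => homogenize d (a i)) 0).toAffineMap.comp (homogenize d)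

theorem sideFunctional_apply (a : Fin d → EuclideanSpace ℝ (Fin d))
    (z : EuclideanSpace ℝ (Fin d)) :
    sideFunctional a z = orientationDet (Fin.cons z a) := by
  refine congrArg Matrix.detRowAlternating ?_
  rw [Fin.update_cons_zero]
  ext j
  cases j using Fin.cases <;> rfl

theorem sideFunctional_eq_zero_iff {a : Fin d → EuclideanSpace ℝ (Fin d)}
    (ha : AffineIndependent ℝ a) {z : EuclideanSpace ℝ (Fin d)} :
    sideFunctional a z = 0 ↔ z ∈ affineSpan ℝ (Set.range a) := by
  rw [← not_iff_not, ← Ne, sideFunctional_apply, orientationDet_ne_zero_iff,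
    affineIndependent_finCons, and_iff_right ha]

theorem disjoint_affineSpan_convexHull_iff_orientation_eq {a : Fin d → EuclideanSpace ℝ (Fin d)}
    {B : Set (EuclideanSpace ℝ (Fin d))}
    (hB : ∀ x ∈ B, AffineIndependent ℝ (Fin.cons x a : Fin (d + 1) → EuclideanSpace ℝ (Fin d))) :
    Disjoint (affineSpan ℝ (Set.range a) : Set (EuclideanSpace ℝ (Fin d))) (convexHull ℝ B) ↔
      ∀ x ∈ B, ∀ y ∈ B, orientation d (Fin.cons x a) = orientation d (Fin.cons y a) := by
  rcases B.eq_empty_or_nonempty with rfl | ⟨x₀, hx₀⟩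
  · simp
  have ha : AffineIndependent ℝ a := (affineIndependent_finCons.mp (hB x₀ hx₀)).1
  have side_ne_zero : 0 ∉ sideFunctional a '' B := by
    rintro ⟨x, hx, hx0⟩
    exact (affineIndependent_finCons.mp (hB x hx)).2 ((sideFunctional_eq_zero_iff ha).mp hx0)
  calc Disjoint (affineSpan ℝ (Set.range a) : Set (EuclideanSpace ℝ (Fin d))) (convexHull ℝ B)
    _ ↔ 0 ∉ convexHull ℝ (sideFunctional a '' B) := by
      simp only [← AffineMap.image_convexHull, Set.disjoint_right, Set.mem_image, not_exists,
        not_and, SetLike.mem_coe, sideFunctional_eq_zero_iff ha]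
    _ ↔ ∀ x ∈ B, ∀ y ∈ B, orientation d (Fin.cons x a) = orientation d (Fin.cons y a) := by
      rw [zero_notMem_convexHull_iff_sign_eq side_ne_zero]
      simp only [Set.forall_mem_image, sideFunctional_apply, orientation_eq_sign_orientationDet]

theorem avoidsD_iff_forall_injective {A B : Set (EuclideanSpace ℝ (Fin d))} :
    AvoidsD d A B ↔ ∀ a : Fin d → EuclideanSpace ℝ (Fin d), Function.Injective a →
      (∀ i, a i ∈ A) →
        Disjoint (affineSpan ℝ (Set.range a) : Set (EuclideanSpace ℝ (Fin d)))
          (convexHull ℝ B) := by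
  classical
  refine ⟨fun h a a_inj haA => ?_, fun h s hsA hs => ?_⟩
  · have := h (Finset.univ.image a) (by simpa [Set.range_subset_iff] using haA)
      (by rw [Finset.card_image_of_injective _ a_inj, Finset.card_fin])
    rwa [Finset.coe_image, Finset.coe_univ, Set.image_univ] at this
  · let e := s.equivFinOfCardEq hs
    have range_eq : Set.range (fun i => (e.symm i : EuclideanSpace ℝ (Fin d))) = s := by
      simpa [Function.comp_def] using e.symm.surjective.range_comp Subtype.val
    rw [← range_eq]
    exact h _ (Subtype.val_injective.comp e.symm.injective) fun i => hsA (e.symm i).2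

theorem finCons_injective_of_disjoint {α : Type*} {I J : Set α} (hIJ : Disjoint I J)
    {g : Fin n → α} (g_inj : Function.Injective g) (hgI : ∀ i, g i ∈ I) {x : α} (hx : x ∈ J) :
    Function.Injective (Fin.cons x g : Fin (n + 1) → α) := by
  refine Fin.cons_injective_iff.mpr ⟨?_, g_inj⟩
  rintro ⟨i, rfl⟩
  exact Set.disjoint_left.mp hIJ (hgI i) hx

theorem avoidsD_image_iff_orientation_eq {p : Fin n → EuclideanSpace ℝ (Fin d)}
    (hp : GenPosSeq d n p) {I J : Set (Fin n)} (hIJ : Disjoint I J) :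
    AvoidsD d (p '' I) (p '' J) ↔
      ∀ g : Fin d → Fin n, Function.Injective g → (∀ i, g i ∈ I) → ∀ x ∈ J, ∀ y ∈ J,
        orientation d (p ∘ (Fin.cons x g : Fin (d + 1) → Fin n)) =
          orientation d (p ∘ (Fin.cons y g : Fin (d + 1) → Fin n)) := by
  have side_iff (g : Fin d → Fin n) (g_inj : Function.Injective g) (hgI : ∀ i, g i ∈ I) :
      Disjoint (affineSpan ℝ (Set.range (p ∘ g)) : Set (EuclideanSpace ℝ (Fin d)))
          (convexHull ℝ (p '' J)) ↔
        ∀ x ∈ J, ∀ y ∈ J, orientation d (p ∘ (Fin.cons x g : Fin (d + 1) → Fin n)) =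
          orientation d (p ∘ (Fin.cons y g : Fin (d + 1) → Fin n)) := by
    simp only [Fin.comp_cons]
    rw [disjoint_affineSpan_convexHull_iff_orientation_eq]
    · simp only [Set.forall_mem_image]
    · rintro _ ⟨x, hx, rfl⟩
      rw [← Fin.comp_cons]
      exact hp _ (finCons_injective_of_disjoint hIJ g_inj hgI hx)
  rw [avoidsD_iff_forall_injective]
  refine ⟨fun h g g_inj hgI x hx => ?_, fun h a a_inj haI => ?_⟩
  · have pg_indep : AffineIndependent ℝ (p ∘ g) :=
      (hp _ (finCons_injective_of_disjoint hIJ g_inj hgI hx)).comp_embedding (Fin.succEmb d)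
    exact (side_iff g g_inj hgI).mp
      (h (p ∘ g) pg_indep.injective fun i => Set.mem_image_of_mem p (hgI i)) x hx
  · choose g hgI hg using haI
    obtain rfl : p ∘ g = a := funext hg
    exact (side_iff g a_inj.of_comp hgI).mpr (h g a_inj.of_comp hgI)

/-- Two sequences of points have the same order type if corresponding `(d+1)`-tuples, taken in
increasing order of their indices, have the same orientation. -/
def SameOrderType (p q : Fin n → EuclideanSpace ℝ (Fin d)) : Prop :=
  ∀ f : Fin (d + 1) → Fin n, StrictMono f → orientation d (p ∘ f) = orientation d (q ∘ f)

variable {p q : Fin n → EuclideanSpace ℝ (Fin d)}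

theorem SameOrderType.orientation_eq_of_injective (hpq : SameOrderType p q)
    {f : Fin (d + 1) → Fin n} (f_inj : Function.Injective f) :
    orientation d (p ∘ f) = orientation d (q ∘ f) := by
  have sorted_strictMono : StrictMono (f ∘ Tuple.sort f) :=
    (Tuple.monotone_sort f).strictMono_of_injective (f_inj.comp (Tuple.sort f).injective)
  have sorted_eq := hpq _ sorted_strictMono
  rw [← Function.comp_assoc, ← Function.comp_assoc, orientation_comp_perm,
    orientation_comp_perm] at sorted_eq
  exact mul_left_cancel₀ (by simp) sorted_eq

theorem SameOrderType.genPosSeq (hpq : SameOrderType p q) (hp : GenPosSeq d n p) :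
    GenPosSeq d n q := by
  intro f f_inj
  rw [← orientation_ne_zero_iff, ← hpq.orientation_eq_of_injective f_inj]
  exact orientation_ne_zero_iff.mpr (hp f f_inj)

theorem SameOrderType.avoidsD_image_iff (hpq : SameOrderType p q) (hp : GenPosSeq d n p)
    {I J : Set (Fin n)} (hIJ : Disjoint I J) :
    AvoidsD d (p '' I) (p '' J) ↔ AvoidsD d (q '' I) (q '' J) := by
  rw [avoidsD_image_iff_orientation_eq hp hIJ,
    avoidsD_image_iff_orientation_eq (hpq.genPosSeq hp) hIJ]
  refine forall₃_congr fun g g_inj hgI => forall₄_congr fun x hx y hy => ?_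
  rw [hpq.orientation_eq_of_injective (finCons_injective_of_disjoint hIJ g_inj hgI hx),
    hpq.orientation_eq_of_injective (finCons_injective_of_disjoint hIJ g_inj hgI hy)]

theorem mutually_avoiding_order_type_invariant_general (hp : GenPosSeq d n p)
    (hpq : SameOrderType p q) {I J : Set (Fin n)} (hIJ : Disjoint I J) :
    MutuallyAvoidingD d (p '' I) (p '' J) ↔ MutuallyAvoidingD d (q '' I) (q '' J) :=
  and_congr (hpq.avoidsD_image_iff hp hIJ) (hpq.avoidsD_image_iff hp hIJ.symm)

end

/-- Being mutually avoiding depends only on the order type: if two sequences of `2k`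
points in general position in `ℝ^d` have the same order type and the first and second
halves of the first sequence are mutually avoiding, then so are the first and second
halves of the second sequence. -/
theorem mutually_avoiding_order_type_invariant (d k : ℕ) (hd : 1 ≤ d) (hk : d ≤ k)
    (p q : Fin (2 * k) → EuclideanSpace ℝ (Fin d))
    (hp : GenPosSeq d (2 * k) p) (hq : GenPosSeq d (2 * k) q)
    (hot : ∀ f : Fin (d + 1) → Fin (2 * k), StrictMono f →
      orientation d (p ∘ f) = orientation d (q ∘ f))
    (hav : MutuallyAvoidingD d (p '' {i : Fin (2 * k) | (i : ℕ) < k})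
      (p '' {i : Fin (2 * k) | k ≤ (i : ℕ)})) :
    MutuallyAvoidingD d (q '' {i : Fin (2 * k) | (i : ℕ) < k})
      (q '' {i : Fin (2 * k) | k ≤ (i : ℕ)}) := by
  refine (mutually_avoiding_order_type_invariant_general hp hot ?_).mp hav
  simp [Set.disjoint_left]
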